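/- Fix a real number T. There exists a constant C = C(T) > 0 such that for every integer N ≥ 3 and every primitive Dirichlet character χ modulo N for which GRH(χ) holds, one has L(1 + 2iT, χ) ≠ 0 and |L′(1 + 2iT, χ) / L(1 + 2iT, χ)| ≤ C · log log N. -/

import Mathlib

open Complex

/-- GRH for a single Dirichlet L-function: every zero of `L(s, χ)` in the critical strip
`0 < Re(s) < 1` lies on the critical line `Re(s) = 1/2`. -/
def GRHFor {N : ℕ} [NeZero N] (χ : DirichletCharacter ℂ N) : Prop :=
  ∀ s : ℂ, 0 < s.re → s.re < 1 → DirichletCharacter.LFunction χ s = 0 → s.re = 1 / 2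

/-!
Write `s = σ + it`. GRH and partial summation give, on a disc of radius `3/2` about `2 + it`, that
`L(·, χ)` has no zeros and is `O(N (1 + |t|))` times its value at the centre. Borel–Carathéodory
applied to a branch of `log L` then yields `L′/L ≪ log N · (1 + |t|)` for `3/4 ≤ σ ≤ 2`. To the
right of `σ = 1`, comparison with `ζ` gives `L′/L ≪ 1/(σ - 1)` uniformly in `χ`. Interpolating by
the three lines theorem between `σ = 3/4` and `σ = 1 + 1/(1 + log V)`, where `V ≍ log N`, loses only
the bounded factor `V ^ O(1/log V)` on the line `σ = 1`, leaving `1 + log V ≪ log log N`.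
-/

open Filter Metric Set

section Holomorphic

variable {f g : ℂ → ℂ} {c s : ℂ} {R M : ℝ}

lemma exists_eq_mul_exp_of_ne_zero_on_ball (hR : 0 < R) (hg : DifferentiableOn ℂ g (ball c R))
    (hg₀ : ∀ z ∈ ball c R, g z ≠ 0) :
    ∃ f : ℂ → ℂ, f c = 0 ∧ (∀ z ∈ ball c R, HasDerivAt f (logDeriv g z) z) ∧
      ∀ z ∈ ball c R, g z = g c * exp (f z) := by
  have hlog : DifferentiableOn ℂ (logDeriv g) (ball c R) :=
    (hg.deriv isOpen_ball).div hg hg₀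
  obtain ⟨f, hfc, hf⟩ := hlog.isExactOn_ball.with_val_at c 0
  have hexp : EqOn (logDeriv g) (logDeriv fun z ↦ exp (f z)) (ball c R) := fun z hz ↦ by
    rw [logDeriv_apply (fun z ↦ exp (f z)), (hf z hz).cexp.deriv,
      mul_div_cancel_left₀ _ (exp_ne_zero _)]
  have hexp_diff : DifferentiableOn ℂ (fun z ↦ exp (f z)) (ball c R) := fun z hz ↦
    (hf z hz).cexp.differentiableAt.differentiableWithinAt
  obtain ⟨a, -, ha⟩ := (logDeriv_eqOn_iff hg hexp_diff isOpen_ball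
    (convex_ball c R).isPreconnected (fun _ _ ↦ exp_ne_zero _) hg₀).1 hexp
  have hac : g c = a := by simpa [hfc] using ha (mem_ball_self hR)
  exact ⟨f, hfc, hf, fun z hz ↦ by simpa [hac] using ha hz⟩

lemma sub_lt_re_of_mem_ball (hs : s ∈ ball c R) : c.re - R < s.re := by
  have hre : |c.re - s.re| < R := (abs_re_le_norm (c - s)).trans_lt (mem_ball_iff_norm'.1 hs)
  linarith [(abs_lt.1 hre).2]

lemma norm_le_of_re_le_on_ball (hM : 0 < M) (hf : DifferentiableOn ℂ f (ball c R))
    (hre : ∀ z ∈ ball c R, (f z).re ≤ M) (hfc : f c = 0) (hs : s ∈ ball c R) :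
    ‖f s‖ ≤ 2 * M * dist s c / (R - dist s c) := by
  have hmem {w : ℂ} (hw : w ∈ ball 0 R) : w + c ∈ ball c R := by simpa using hw
  have hdiff : DifferentiableOn ℂ (fun w ↦ f (w + c)) (ball 0 R) :=
    hf.comp (by fun_prop) fun _ ↦ hmem
  simpa [dist_eq_norm] using borelCaratheodory_zero (z := s - c) hM hdiff
    (fun w hw ↦ hre _ (hmem hw)) (pos_of_mem_ball hs) (by simpa [dist_eq_norm] using hs)
    (by simpa using hfc)

lemma norm_deriv_le_of_re_le_on_ball (hM : 0 < M) (hf : DifferentiableOn ℂ f (ball c R))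
    (hre : ∀ z ∈ ball c R, (f z).re ≤ M) (hfc : f c = 0) (hs : s ∈ ball c R) :
    ‖deriv f s‖ ≤ 4 * M * (R + dist s c) / (R - dist s c) ^ 2 := by
  set d := dist s c
  have hR : 0 < R := pos_of_mem_ball hs
  have hd : 0 < R - d := sub_pos.2 hs
  have hclosure : closedBall s ((R - d) / 2) ⊆ ball c R :=
    closedBall_subset_ball' (by linarith)
  have hsphere : ∀ z ∈ sphere s ((R - d) / 2), ‖f z‖ ≤ 2 * M * (R + d) / (R - d) := by
    intro z hz
    have hzc : dist z c ≤ (R + d) / 2 := by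
      linarith [dist_triangle z s c, mem_sphere.1 hz]
    calc ‖f z‖ ≤ 2 * M * dist z c / (R - dist z c) :=
          norm_le_of_re_le_on_ball hM hf hre hfc (hclosure (sphere_subset_closedBall hz))
      _ ≤ 2 * M * ((R + d) / 2) / (R - (R + d) / 2) := by
          gcongr
          linarith
      _ = 2 * M * (R + d) / (R - d) := by
          rw [show R - (R + d) / 2 = (R - d) / 2 by ring]
          field
  have hcauchy := norm_deriv_le_of_forall_mem_sphere_norm_le (half_pos hd)
    (hf.diffContOnCl_ball hclosure) hsphere
  calc ‖deriv f s‖ ≤ 2 * M * (R + d) / (R - d) / ((R - d) / 2) := hcauchy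
    _ = 4 * M * (R + d) / (R - d) ^ 2 := by field

lemma norm_logDeriv_le_of_norm_le_exp_mul (hM : 0 < M) (hg : DifferentiableOn ℂ g (ball c R))
    (hg₀ : ∀ z ∈ ball c R, g z ≠ 0) (hgM : ∀ z ∈ ball c R, ‖g z‖ ≤ Real.exp M * ‖g c‖)
    (hs : s ∈ ball c R) :
    ‖logDeriv g s‖ ≤ 4 * M * (R + dist s c) / (R - dist s c) ^ 2 := by
  have hR : 0 < R := pos_of_mem_ball hs
  obtain ⟨f, hfc, hf, hgf⟩ := exists_eq_mul_exp_of_ne_zero_on_ball hR hg hg₀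
  have hre : ∀ z ∈ ball c R, (f z).re ≤ M := by
    intro z hz
    have hle := hgM z hz
    rw [hgf z hz, norm_mul, norm_exp, mul_comm] at hle
    exact Real.exp_le_exp.1 (le_of_mul_le_mul_right hle
      (norm_pos_iff.2 (hg₀ c (mem_ball_self hR))))
  rw [← (hf s hs).deriv]
  exact norm_deriv_le_of_re_le_on_ball hM
    (fun z hz ↦ (hf z hz).differentiableAt.differentiableWithinAt) hre hfc hs

end Holomorphic

section Strip

lemma norm_le_rpow_mul_of_strip {F : ℂ → ℂ} {z : ℂ} {l u a b : ℝ} (hlz : l < z.re)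
    (hzu : z.re ≤ u) (ha : 1 ≤ a) (hb : 1 ≤ b) (hF : DifferentiableOn ℂ F (re ⁻¹' Icc l u))
    (hFa : ∀ s : ℂ, l ≤ s.re → s.re ≤ u → ‖F s‖ ≤ a) (hFb : ∀ s : ℂ, s.re = u → ‖F s‖ ≤ b) :
    ‖F z‖ ≤ a ^ ((u - z.re) / (z.re - l)) * b := by
  have hlu : l < u := hlz.trans_le hzu
  have hinterp := HadamardThreeLines.norm_le_interp_of_mem_verticalClosedStrip' hlu
    (show z ∈ HadamardThreeLines.verticalClosedStrip l u from ⟨hlz.le, hzu⟩)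
    (DifferentiableOn.diffContOnCl
      (by rwa [HadamardThreeLines.verticalStrip, closure_preimage_re, closure_Ioo hlu.ne]))
    ⟨a, by rintro _ ⟨s, hs, rfl⟩; exact hFa s hs.1 hs.2⟩
    (fun s hs ↦ hFa s (mem_preimage.1 hs).ge ((mem_preimage.1 hs).trans_le hlu.le)) hFb
  have hexp_a : 1 - (z.re - l) / (u - l) ≤ (u - z.re) / (z.re - l) := by
    have hul : u - l ≠ 0 := (sub_pos.2 hlu).ne'
    calc 1 - (z.re - l) / (u - l) = (u - z.re) / (u - l) := by field_simp; ring
      _ ≤ (u - z.re) / (z.re - l) := by gcongr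
  have hexp_b : (z.re - l) / (u - l) ≤ 1 := div_le_one_of_le₀ (by linarith) (by linarith)
  calc ‖F z‖ ≤ a ^ (1 - (z.re - l) / (u - l)) * b ^ ((z.re - l) / (u - l)) := hinterp
    _ ≤ a ^ ((u - z.re) / (z.re - l)) * b ^ (1 : ℝ) := by gcongr
    _ = a ^ ((u - z.re) / (z.re - l)) * b := by rw [Real.rpow_one]

lemma mul_rpow_one_div_one_add_log_le {V E : ℝ} (hV : 1 ≤ V) (hE : 1 ≤ E) :
    (V * E) ^ (1 / (1 + Real.log V)) ≤ Real.exp 1 * E := by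
  have hlogV : 0 ≤ Real.log V := Real.log_nonneg hV
  have hlogE : 0 ≤ Real.log E := Real.log_nonneg hE
  rw [Real.rpow_le_iff_le_log (by positivity) (by positivity),
    Real.log_mul (by positivity) (by positivity), Real.log_mul (by positivity) (by positivity),
    Real.log_exp, one_div_mul_eq_div, div_le_iff₀ (by positivity)]
  nlinarith

lemma one_le_norm_sub_add_one_add {s z : ℂ} {δ : ℝ} (hs : z.re - δ ≤ s.re) :
    1 ≤ ‖s - z + (1 + δ)‖ := by
  have hre := re_le_norm (s - z + (1 + δ))
  simp only [add_re, sub_re, ofReal_re, one_re] at hre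
  linarith

lemma one_add_abs_im_le_mul_norm {s z : ℂ} {δ : ℝ} (hs : z.re - δ ≤ s.re) :
    1 + |s.im| ≤ (2 + |z.im|) * ‖s - z + (1 + δ)‖ := by
  have him : |s.im - z.im| ≤ ‖s - z + (1 + δ)‖ := by
    simpa using abs_im_le_norm (s - z + (1 + δ))
  nlinarith [one_le_norm_sub_add_one_add hs, abs_nonneg z.im, abs_sub_abs_le_abs_sub s.im z.im]

lemma norm_le_mul_one_add_log_of_strip {g : ℂ → ℂ} {z : ℂ} {δ V B : ℝ} (hδ : 0 < δ) (hV : 1 ≤ V)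
    (hB : 1 ≤ B) (hz : z.re = 1) (hg : DifferentiableOn ℂ g (re ⁻¹' Icc (1 - δ) 2))
    (hgV : ∀ s : ℂ, 1 - δ ≤ s.re → s.re ≤ 2 → ‖g s‖ ≤ V * (1 + |s.im|))
    (hgB : ∀ s : ℂ, 1 < s.re → s.re ≤ 2 → ‖g s‖ ≤ B / (s.re - 1)) :
    ‖g z‖ ≤ (1 + δ) * ((Real.exp 1 * (2 + |z.im|)) ^ (1 / δ) * (B * (1 + Real.log V))) := by
  have hlogV : 0 ≤ Real.log V := Real.log_nonneg hV
  set η := 1 / (1 + Real.log V) with hη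
  have hη₀ : 0 < η := by positivity
  have hη₁ : η ≤ 1 := div_le_one_of_le₀ (by linarith) (by positivity)
  -- Dividing by this linear weight makes `g` bounded on the strip, as three lines requires.
  let p (s : ℂ) : ℂ := s - z + (1 + δ)
  have hp {s : ℂ} (hs : 1 - δ ≤ s.re) : 1 ≤ ‖p s‖ := one_le_norm_sub_add_one_add (hz ▸ hs)
  have hF : DifferentiableOn ℂ (fun s ↦ g s / p s) (re ⁻¹' Icc (1 - δ) (1 + η)) := by
    refine (hg.mono fun s hs ↦ ⟨hs.1, by linarith [hs.2]⟩).div (by fun_prop) fun s hs ↦ ?_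
    exact norm_pos_iff.1 (one_pos.trans_le (hp hs.1))
  have hFV : ∀ s : ℂ, 1 - δ ≤ s.re → s.re ≤ 1 + η → ‖g s / p s‖ ≤ V * (2 + |z.im|) := by
    intro s hs₁ hs₂
    rw [norm_div, div_le_iff₀ (one_pos.trans_le (hp hs₁)), mul_assoc]
    exact (hgV s hs₁ (by linarith)).trans (by gcongr; exact one_add_abs_im_le_mul_norm (hz ▸ hs₁))
  have hFB : ∀ s : ℂ, s.re = 1 + η → ‖g s / p s‖ ≤ B * (1 + Real.log V) := by
    intro s hs
    calc ‖g s / p s‖ ≤ ‖g s‖ := by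
          rw [norm_div]; exact div_le_self (norm_nonneg _) (hp (by linarith))
      _ ≤ B / (s.re - 1) := hgB s (by linarith) (by linarith)
      _ = B * (1 + Real.log V) := by rw [hs, add_sub_cancel_left, hη, div_div_eq_mul_div, div_one]
  have hinterp := norm_le_rpow_mul_of_strip (z := z) (by linarith) (by linarith)
    (by nlinarith [abs_nonneg z.im]) (by nlinarith) hF hFV hFB
  have hpz : ‖p z‖ = 1 + δ := by
    simpa [p, abs_of_pos (show 0 < 1 + δ by positivity)] using norm_real (1 + δ)
  calc ‖g z‖ = (1 + δ) * ‖g z / p z‖ := by rw [norm_div, hpz]; field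
    _ ≤ (1 + δ) * ((V * (2 + |z.im|)) ^ (η / δ) * (B * (1 + Real.log V))) := by
        gcongr; simpa [hz] using hinterp
    _ ≤ _ := by
        rw [div_eq_mul_one_div η, Real.rpow_mul (by positivity)]
        gcongr
        exact mul_rpow_one_div_one_add_log_le hV (by linarith [abs_nonneg z.im])

end Strip

section Summatory

/-- The summatory function `t ↦ ∑ f k` over the integers `1 ≤ k ≤ t`, whose Mellin transform
continues the `L`-series of `f`. -/
noncomputable def summatory (f : ℕ → ℂ) (t : ℝ) : ℂ := ∑ k ∈ Finset.Icc 1 ⌊t⌋₊, f k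

variable {f : ℕ → ℂ} {B : ℝ} {s : ℂ}

lemma summatory_eq_zero_of_lt_one {t : ℝ} (ht : t < 1) : summatory f t = 0 := by
  simp [summatory, Nat.floor_eq_zero.2 ht]

lemma locallyIntegrableOn_summatory : MeasureTheory.LocallyIntegrableOn (summatory f) (Ioi 0) := by
  have hone : MeasureTheory.LocallyIntegrableOn (fun _ : ℝ ↦ (1 : ℂ)) (Ici 0) :=
    (MeasureTheory.locallyIntegrable_const 1).locallyIntegrableOn _
  simpa [summatory] using!
    (locallyIntegrableOn_mul_sum_Icc f (m := 1) le_rfl hone).mono_set Ioi_subset_Ici_self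

lemma mellin_summatory_neg (s : ℂ) :
    mellin (summatory f) (-s) = ∫ t in Ioi (1 : ℝ), summatory f t * (t : ℂ) ^ (-(s + 1)) := by
  have hvanish : ∀ t ∈ Ioi (0 : ℝ) \ Ici 1, (t : ℂ) ^ (-s - 1) • summatory f t = 0 := by
    rintro t ⟨-, ht⟩
    rw [summatory_eq_zero_of_lt_one (not_le.1 ht), smul_zero]
  rw [mellin, MeasureTheory.setIntegral_eq_of_subset_of_forall_sdiff_eq_zero measurableSet_Ioi
    (Ici_subset_Ioi.2 one_pos) hvanish, MeasureTheory.integral_Ici_eq_integral_Ioi]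
  simp only [smul_eq_mul, mul_comm, neg_add']

lemma differentiableAt_mellin_summatory_neg (hB : ∀ t, ‖summatory f t‖ ≤ B) (hs : 0 < s.re) :
    DifferentiableAt ℂ (fun z ↦ mellin (summatory f) (-z)) s := by
  have htop : summatory f =O[atTop] fun t : ℝ ↦ t ^ (-(0 : ℝ)) :=
    .of_bound B (.of_forall fun t ↦ by simpa using hB t)
  have hzero : summatory f =O[nhdsWithin 0 (Ioi 0)] fun t : ℝ ↦ t ^ (-(-s.re - 1)) := by
    refine .of_bound 1 ?_
    filter_upwards [nhdsWithin_le_nhds (Iio_mem_nhds (zero_lt_one (α := ℝ)))] with t ht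
    rw [summatory_eq_zero_of_lt_one ht]
    simp
  have hmellin : DifferentiableAt ℂ (mellin (summatory f)) (-s) :=
    mellin_differentiableAt_of_isBigO_rpow locallyIntegrableOn_summatory htop (by simpa) hzero
      (by simp)
  exact hmellin.comp s differentiable_neg.differentiableAt

lemma norm_mellin_summatory_neg_le (hB : ∀ t, ‖summatory f t‖ ≤ B) (hs : 0 < s.re) :
    ‖mellin (summatory f) (-s)‖ ≤ B / s.re := by
  have hint : MeasureTheory.IntegrableOn (fun t : ℝ ↦ B * t ^ (-s.re - 1)) (Ioi 1) :=
    (integrableOn_Ioi_rpow_of_lt (by linarith) one_pos).const_mul _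
  have hbound : ∀ t ∈ Ioi (1 : ℝ),
      ‖summatory f t * (t : ℂ) ^ (-(s + 1))‖ ≤ B * t ^ (-s.re - 1) := by
    intro t ht
    rw [norm_mul, norm_cpow_eq_rpow_re_of_pos (one_pos.trans ht), neg_add', sub_re, neg_re, one_re]
    gcongr
    · exact Real.rpow_nonneg (one_pos.trans ht).le _
    · exact hB t
  calc ‖mellin (summatory f) (-s)‖
      ≤ ∫ t in Ioi (1 : ℝ), B * t ^ (-s.re - 1) := by
        rw [mellin_summatory_neg]
        exact MeasureTheory.norm_integral_le_of_norm_le hint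
          (MeasureTheory.ae_restrict_of_forall_mem measurableSet_Ioi hbound)
    _ = B / s.re := by
        rw [MeasureTheory.integral_const_mul, integral_Ioi_rpow_of_lt (by linarith) one_pos]
        simp [div_eq_mul_inv]

lemma LSeries_eq_mul_mellin_summatory (hB : ∀ t, ‖summatory f t‖ ≤ B) (hs : 0 < s.re)
    (hf : LSeriesSummable f s) : LSeries f s = s * mellin (summatory f) (-s) := by
  rw [mellin_summatory_neg]
  refine LSeries_eq_mul_integral f le_rfl hs hf (.of_bound B (.of_forall fun n ↦ ?_))
  simpa [summatory] using hB n

lemma norm_le_of_eq_LSeries_of_norm_summatory_le {L : ℂ → ℂ} {a : ℝ}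
    (hB : ∀ t, ‖summatory f t‖ ≤ B) (hL : DifferentiableOn ℂ L {z | 0 < z.re})
    (hf : ∀ z : ℂ, a < z.re → LSeriesSummable f z) (hLf : ∀ z : ℂ, a < z.re → L z = LSeries f z)
    (hs : 0 < s.re) : ‖L s‖ ≤ ‖s‖ * (B / s.re) := by
  have hopen : IsOpen {z : ℂ | 0 < z.re} := isOpen_lt continuous_const continuous_re
  have hdiff : DifferentiableOn ℂ (fun z ↦ z * mellin (summatory f) (-z)) {z | 0 < z.re} :=
    fun z hz ↦ (differentiableAt_id.mul
      (differentiableAt_mellin_summatory_neg hB hz)).differentiableWithinAt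
  set z₀ : ℂ := ((max a 0 + 1 : ℝ) : ℂ) with hz₀
  have hz₀re : max a 0 < z₀.re := by simp [hz₀]
  have hnear : L =ᶠ[nhds z₀] fun z ↦ z * mellin (summatory f) (-z) := by
    filter_upwards [(isOpen_lt continuous_const continuous_re).mem_nhds hz₀re] with z hz
    rw [hLf z (max_lt_iff.1 hz).1,
      LSeries_eq_mul_mellin_summatory hB (max_lt_iff.1 hz).2 (hf z (max_lt_iff.1 hz).1)]
  have heq : EqOn L (fun z ↦ z * mellin (summatory f) (-z)) {z | 0 < z.re} :=
    (hL.analyticOnNhd hopen).eqOn_of_preconnected_of_eventuallyEq (hdiff.analyticOnNhd hopen)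
      (convex_halfSpace_re_gt 0).isPreconnected (max_lt_iff.1 hz₀re).2 hnear
  rw [heq hs, norm_mul]
  gcongr
  exact norm_mellin_summatory_neg_le hB hs

end Summatory

lemma sum_range_eq_sum_range_mod_of_periodic {M : Type*} [AddCommMonoid M] {f : ℕ → M} {N : ℕ}
    (hf : Function.Periodic f N) (hsum : ∑ k ∈ Finset.range N, f k = 0) (m : ℕ) :
    ∑ k ∈ Finset.range m, f k = ∑ k ∈ Finset.range (m % N), f k := by
  have hmul (q : ℕ) : ∑ k ∈ Finset.range (N * q + m % N), f k =
      ∑ k ∈ Finset.range (m % N), f k := by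
    induction q with
    | zero => simp
    | succ q ih =>
      rw [mul_add_one, add_right_comm, add_comm _ N, Finset.sum_range_add, hsum, zero_add, ← ih]
      simp only [add_comm N, hf _]
  rw [← hmul (m / N), Nat.div_add_mod]

lemma norm_LSeries_le_norm_LSeries_re {f : ℕ → ℂ} {g : ℕ → ℝ} {s : ℂ} (hfg : ∀ n, ‖f n‖ ≤ g n)
    (hg : LSeriesSummable (fun n ↦ (g n : ℂ)) s.re) :
    ‖LSeries f s‖ ≤ ‖LSeries (fun n ↦ (g n : ℂ)) s.re‖ := by
  have hterm (n : ℕ) :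
      ‖LSeries.term f s n‖ ≤ ‖LSeries.term (fun n ↦ (g n : ℂ)) s.re n‖ := by
    simp only [LSeries.norm_term_eq, norm_real, ofReal_re]
    split_ifs
    · rfl
    · gcongr
      exact (hfg n).trans (Real.le_norm_self _)
  have hnonneg (n : ℕ) : LSeries.term (fun n ↦ (g n : ℂ)) s.re n =
      (‖LSeries.term (fun n ↦ (g n : ℂ)) s.re n‖ : ℝ) := by
    rw [LSeries.norm_term_eq, LSeries.term_def]
    split_ifs
    · simp
    · rw [norm_real, Real.norm_of_nonneg ((norm_nonneg _).trans (hfg n)), ofReal_re, ofReal_div,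
        ofReal_cpow n.cast_nonneg, ofReal_natCast]
  calc ‖LSeries f s‖ ≤ ∑' n, ‖LSeries.term (fun n ↦ (g n : ℂ)) s.re n‖ :=
        tsum_of_norm_bounded hg.norm.hasSum hterm
    _ = ‖LSeries (fun n ↦ (g n : ℂ)) s.re‖ := by
        rw [LSeries, tsum_congr hnonneg, ← ofReal_tsum, norm_real,
          Real.norm_of_nonneg (tsum_nonneg fun _ ↦ norm_nonneg _)]

open ArithmeticFunction in
lemma exists_norm_LSeries_vonMangoldt_le :
    ∃ B : ℝ, 1 ≤ B ∧ ∀ σ : ℝ, 1 < σ → σ ≤ 2 →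
      ‖LSeries (fun n ↦ (vonMangoldt n : ℂ)) σ‖ ≤ B / (σ - 1) := by
  have hcont : ContinuousOn
      (fun σ : ℝ ↦ vonMangoldt.LFunctionResidueClassAux (1 : ZMod 1) σ) (Icc 1 2) :=
    (vonMangoldt.continuousOn_LFunctionResidueClassAux 1).comp continuous_ofReal.continuousOn
      fun σ hσ ↦ by simpa using hσ.1
  obtain ⟨K, hK⟩ := isCompact_Icc.exists_bound_of_continuousOn hcont
  have hK₀ : 0 ≤ K := (norm_nonneg _).trans (hK 1 (by simp))
  refine ⟨K + 1, by linarith, fun σ hσ₁ hσ₂ ↦ ?_⟩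
  have hσ : 0 < σ - 1 := sub_pos.2 hσ₁
  have hclass : vonMangoldt.residueClass (1 : ZMod 1) = fun n ↦ vonMangoldt n := by
    ext n
    simp [vonMangoldt.residueClass, Subsingleton.elim (n : ZMod 1) 1]
  have hdecomp : LSeries (fun n ↦ (vonMangoldt n : ℂ)) σ =
      vonMangoldt.LFunctionResidueClassAux (1 : ZMod 1) σ + ((1 / (σ - 1) : ℝ) : ℂ) := by
    rw [vonMangoldt.eqOn_LFunctionResidueClassAux isUnit_one (by simpa using hσ₁), hclass]
    simp
  calc ‖LSeries (fun n ↦ (vonMangoldt n : ℂ)) σ‖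
      ≤ K + 1 / (σ - 1) := by
        rw [hdecomp]
        refine norm_add_le_of_le (hK σ ⟨hσ₁.le, hσ₂⟩) ?_
        rw [norm_real, Real.norm_of_nonneg (by positivity)]
    _ ≤ K / (σ - 1) + 1 / (σ - 1) := by
        gcongr
        exact le_div_self hK₀ hσ (by linarith)
    _ = (K + 1) / (σ - 1) := (add_div _ _ _).symm

lemma one_lt_log_three : 1 < Real.log 3 :=
  (Real.lt_log_iff_exp_lt (by norm_num)).2 Real.exp_one_lt_three

lemma one_add_log_mul_log_le {K x : ℝ} (hK : 1 ≤ K) (hx : 3 ≤ x) :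
    1 + Real.log (K * Real.log x) ≤
      (1 + (1 + Real.log K) / Real.log (Real.log 3)) * Real.log (Real.log x) := by
  have hlogx : Real.log 3 ≤ Real.log x := Real.log_le_log (by norm_num) hx
  have hloglog3 : 0 < Real.log (Real.log 3) := Real.log_pos one_lt_log_three
  have hlogK : 0 ≤ Real.log K := Real.log_nonneg hK
  calc 1 + Real.log (K * Real.log x)
      = Real.log (Real.log x) +
          (1 + Real.log K) / Real.log (Real.log 3) * Real.log (Real.log 3) := by
        rw [Real.log_mul (by positivity) (by linarith [one_lt_log_three])]
        field_simp
        ring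
    _ ≤ Real.log (Real.log x) +
          (1 + Real.log K) / Real.log (Real.log 3) * Real.log (Real.log x) := by gcongr
    _ = _ := by ring

section DirichletCharacter

open DirichletCharacter

variable {N : ℕ} [NeZero N] {χ : DirichletCharacter ℂ N} {s : ℂ}

lemma three_le_level_of_ne_one (hχ : χ ≠ 1) : 3 ≤ N := by
  by_contra! hN
  have hN₀ : N ≠ 0 := NeZero.ne N
  obtain rfl | rfl : N = 1 ∨ N = 2 := by lia
  · exact hχ (level_one χ)
  · refine hχ (MulChar.ext fun a ↦ ?_)
    rw [Subsingleton.elim a 1]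
    simp

lemma ne_one_of_isPrimitive (hN : N ≠ 1) (hχ : χ.IsPrimitive) : χ ≠ 1 := by
  rintro rfl
  exact hN (hχ.symm.trans conductor_one)

lemma sum_range_natCast_eq_zero_of_ne_one (hχ : χ ≠ 1) :
    ∑ k ∈ Finset.range N, χ (k : ZMod N) = 0 := by
  rw [← MulChar.sum_eq_zero_of_ne_one hχ]
  refine Finset.sum_nbij' (fun k ↦ (k : ZMod N)) ZMod.val (by simp) (fun a _ ↦ ?_)
    (fun k hk ↦ ?_) (by simp) (by simp)
  · exact Finset.mem_range.2 (ZMod.val_lt a)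
  · exact ZMod.val_cast_of_lt (Finset.mem_range.1 hk)

lemma norm_summatory_le_level (hχ : χ ≠ 1) (t : ℝ) :
    ‖summatory (fun n ↦ χ (n : ZMod N)) t‖ ≤ N := by
  have hperiodic : Function.Periodic (fun n : ℕ ↦ χ (n : ZMod N)) N := fun n ↦ by simp
  have hχ₀ : χ ((0 : ℕ) : ZMod N) = 0 := by
    rw [Nat.cast_zero]
    exact map_zero' χ (by have := three_le_level_of_ne_one hχ; lia)
  have hsum : summatory (fun n ↦ χ (n : ZMod N)) t =
      ∑ k ∈ Finset.range (⌊t⌋₊ + 1), χ (k : ZMod N) := by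
    rw [summatory, Finset.range_eq_Ico, Finset.sum_eq_sum_Ico_succ_bot (Nat.succ_pos _), hχ₀,
      zero_add]
    rfl
  rw [hsum, sum_range_eq_sum_range_mod_of_periodic hperiodic
    (sum_range_natCast_eq_zero_of_ne_one hχ)]
  refine (norm_sum_le_of_le _ fun (k : ℕ) _ ↦ χ.norm_le_one (k : ZMod N)).trans ?_
  simpa using (Nat.mod_lt (⌊t⌋₊ + 1) (NeZero.pos N)).le

lemma norm_LFunction_le_of_ne_one (hχ : χ ≠ 1) (hs : 0 < s.re) :
    ‖LFunction χ s‖ ≤ ‖s‖ * (N / s.re) :=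
  norm_le_of_eq_LSeries_of_norm_summatory_le (norm_summatory_le_level hχ)
    (differentiable_LFunction hχ).differentiableOn
    (fun _ ↦ LSeriesSummable_of_one_lt_re χ) (fun _ ↦ LFunction_eq_LSeries χ) hs

lemma one_le_norm_riemannZeta_mul_norm_LFunction (hs : 1 < s.re) :
    1 ≤ ‖riemannZeta s.re‖ * ‖LFunction χ s‖ := by
  have hone : LSeriesSummable (fun _ ↦ ((1 : ℝ) : ℂ)) s.re := by
    simpa using! (LSeriesSummable_one_iff (s := s.re)).2 (by simpa using hs)
  have hmu (n : ℕ) : ‖χ n * (ArithmeticFunction.moebius n : ℂ)‖ ≤ 1 := by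
    rw [norm_mul, norm_intCast]
    exact mul_le_one₀ (χ.norm_le_one _) (abs_nonneg _)
      (mod_cast ArithmeticFunction.abs_moebius_le_one)
  have hle := norm_LSeries_le_norm_LSeries_re hmu hone
  rw [← norm_one (α := ℂ), ← LSeries.mul_mu_eq_one χ hs, norm_mul, mul_comm,
    LFunction_eq_LSeries χ hs, ← LSeries_one_eq_riemannZeta (by simpa using hs)]
  gcongr
  simpa using! hle

lemma exists_norm_logDeriv_LFunction_le_div :
    ∃ B : ℝ, 1 ≤ B ∧ ∀ (N : ℕ) [NeZero N] (χ : DirichletCharacter ℂ N) (s : ℂ),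
      1 < s.re → s.re ≤ 2 → ‖logDeriv (LFunction χ) s‖ ≤ B / (s.re - 1) := by
  obtain ⟨B, hB₁, hB⟩ := exists_norm_LSeries_vonMangoldt_le
  refine ⟨B, hB₁, fun N _ χ s hs₁ hs₂ ↦ ?_⟩
  have htwist (n : ℕ) : ‖χ n * (ArithmeticFunction.vonMangoldt n : ℂ)‖ ≤
      ArithmeticFunction.vonMangoldt n := by
    rw [norm_mul, norm_real, Real.norm_of_nonneg ArithmeticFunction.vonMangoldt_nonneg]
    exact mul_le_of_le_one_left ArithmeticFunction.vonMangoldt_nonneg (χ.norm_le_one _)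
  rw [logDeriv_apply, LFunction_eq_LSeries χ hs₁, deriv_LFunction_eq_deriv_LSeries χ hs₁,
    ← norm_neg, ← neg_div, ← LSeries_twist_vonMangoldt_eq χ hs₁]
  exact (norm_LSeries_le_norm_LSeries_re htwist
    (ArithmeticFunction.LSeriesSummable_vonMangoldt (by simpa using hs₁))).trans (hB _ hs₁ hs₂)

lemma LFunction_ne_zero_of_GRHFor (hχ : χ ≠ 1) (hG : GRHFor χ) (hs : 1 / 2 < s.re) :
    LFunction χ s ≠ 0 := by
  rcases lt_or_ge s.re 1 with hs₁ | hs₁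
  · exact fun h₀ ↦ hs.ne' (hG s (by linarith) hs₁ h₀)
  · exact LFunction_ne_zero_of_one_le_re χ (.inl hχ) hs₁

lemma one_le_two_mul_norm_LFunction (hs : s.re = 2) : 1 ≤ 2 * ‖LFunction χ s‖ := by
  have hzeta : ‖riemannZeta s.re‖ ≤ 2 := by
    rw [hs, ofReal_ofNat, riemannZeta_two]
    norm_num [abs_of_pos Real.pi_pos]
    nlinarith [Real.pi_lt_d2, Real.pi_pos]
  exact (one_le_norm_riemannZeta_mul_norm_LFunction (by linarith)).trans (by gcongr)

lemma norm_LFunction_le_mul_norm_LFunction_center (hχ : χ ≠ 1) {t : ℝ} {z : ℂ}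
    (hz : z ∈ ball (⟨2, t⟩ : ℂ) (3 / 2)) :
    ‖LFunction χ z‖ ≤ 16 * N * (1 + |t|) * ‖LFunction χ ⟨2, t⟩‖ := by
  have hre : 1 / 2 < z.re := by linarith [sub_lt_re_of_mem_ball hz]
  have hnorm : ‖z‖ ≤ 4 * (1 + |t|) := by
    have hcenter : ‖(⟨2, t⟩ : ℂ)‖ ≤ 2 + |t| := by simpa using norm_le_abs_re_add_abs_im ⟨2, t⟩
    linarith [norm_le_norm_add_norm_sub' z ⟨2, t⟩, mem_ball_iff_norm.1 hz, abs_nonneg t]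
  calc ‖LFunction χ z‖ ≤ ‖z‖ * (N / z.re) := norm_LFunction_le_of_ne_one hχ (by linarith)
    _ ≤ 4 * (1 + |t|) * (N / (1 / 2)) := by gcongr
    _ = 8 * N * (1 + |t|) * 1 := by ring
    _ ≤ 8 * N * (1 + |t|) * (2 * ‖LFunction χ ⟨2, t⟩‖) := by
        gcongr
        exact one_le_two_mul_norm_LFunction rfl
    _ = 16 * N * (1 + |t|) * ‖LFunction χ ⟨2, t⟩‖ := by ring

lemma norm_logDeriv_LFunction_le_of_GRHFor (hχ : χ ≠ 1) (hG : GRHFor χ) (hs : 1 / 2 < s.re)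
    (hs₂ : s.re ≤ 2) :
    ‖logDeriv (LFunction χ) s‖ ≤
      12 / (s.re - 1 / 2) ^ 2 * Real.log (16 * N * (1 + |s.im|)) := by
  have hN : (3 : ℝ) ≤ N := mod_cast three_le_level_of_ne_one hχ
  have harg : 1 < 16 * N * (1 + |s.im|) := by nlinarith [abs_nonneg s.im]
  have hdist : dist s ⟨2, s.im⟩ = 2 - s.re := by
    rw [dist_of_im_eq (z := s) (w := ⟨2, s.im⟩) rfl, Real.dist_eq, abs_sub_comm,
      abs_of_nonneg (by simpa using hs₂)]
  have hne : ∀ z ∈ ball (⟨2, s.im⟩ : ℂ) (3 / 2), LFunction χ z ≠ 0 := fun z hz ↦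
    LFunction_ne_zero_of_GRHFor hχ hG (by linarith [sub_lt_re_of_mem_ball hz])
  have hbound := norm_logDeriv_le_of_norm_le_exp_mul (s := s) (Real.log_pos harg)
    (differentiable_LFunction hχ).differentiableOn hne
    (fun z hz ↦ by
      rw [Real.exp_log (one_pos.trans harg)]
      exact norm_LFunction_le_mul_norm_LFunction_center hχ hz)
    (by rw [mem_ball, hdist]; linarith)
  rw [hdist] at hbound
  have hlog : 0 < Real.log (16 * N * (1 + |s.im|)) := Real.log_pos harg
  calc ‖logDeriv (LFunction χ) s‖
      ≤ 4 * Real.log (16 * N * (1 + |s.im|)) * (3 / 2 + (2 - s.re)) /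
          (3 / 2 - (2 - s.re)) ^ 2 := hbound
    _ ≤ 4 * Real.log (16 * N * (1 + |s.im|)) * 3 / (3 / 2 - (2 - s.re)) ^ 2 := by
        gcongr; linarith
    _ = 12 / (s.re - 1 / 2) ^ 2 * Real.log (16 * N * (1 + |s.im|)) := by ring

lemma norm_logDeriv_LFunction_le_log_level_mul (hχ : χ ≠ 1) (hG : GRHFor χ)
    (hs : 3 / 4 ≤ s.re) (hs₂ : s.re ≤ 2) :
    ‖logDeriv (LFunction χ) s‖ ≤ 768 * Real.log N * (1 + |s.im|) := by
  have hN : (3 : ℝ) ≤ N := mod_cast three_le_level_of_ne_one hχ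
  have hlogN : 1 ≤ Real.log N :=
    one_lt_log_three.le.trans (Real.log_le_log (by norm_num) hN)
  have hlog16 : Real.log 16 ≤ 3 := by
    rw [show (16 : ℝ) = 2 ^ 4 by norm_num, Real.log_pow]
    push_cast
    linarith [Real.log_two_lt_d9]
  have hlogIm : Real.log (1 + |s.im|) ≤ |s.im| := by
    linarith [Real.log_le_sub_one_of_pos (show 0 < 1 + |s.im| by positivity)]
  have hlog : Real.log (16 * N * (1 + |s.im|)) ≤ 4 * Real.log N * (1 + |s.im|) := by
    rw [Real.log_mul (by positivity) (by positivity), Real.log_mul (by norm_num) (by positivity)]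
    nlinarith [abs_nonneg s.im]
  calc ‖logDeriv (LFunction χ) s‖
      ≤ 12 / (s.re - 1 / 2) ^ 2 * Real.log (16 * N * (1 + |s.im|)) :=
        norm_logDeriv_LFunction_le_of_GRHFor hχ hG (by linarith) hs₂
    _ ≤ 12 / (3 / 4 - 1 / 2) ^ 2 * (4 * Real.log N * (1 + |s.im|)) := by
        gcongr
        exact Real.log_nonneg (by nlinarith [abs_nonneg s.im])
    _ = 768 * Real.log N * (1 + |s.im|) := by ring

end DirichletCharacter

theorem log_deriv_L_bound_on_GRH_general :
    ∃ C : ℝ, 0 < C ∧ ∀ (N : ℕ) [NeZero N] (χ : DirichletCharacter ℂ N), χ ≠ 1 → GRHFor χ →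
      ∀ s : ℂ, s.re = 1 → DirichletCharacter.LFunction χ s ≠ 0 ∧
        ‖deriv (DirichletCharacter.LFunction χ) s / DirichletCharacter.LFunction χ s‖ ≤
          C * (2 + |s.im|) ^ 4 * Real.log (Real.log N) := by
  obtain ⟨B, hB₁, hB⟩ := exists_norm_logDeriv_LFunction_le_div
  have hloglog3 : 0 < Real.log (Real.log 3) := Real.log_pos one_lt_log_three
  set D := 1 + (1 + Real.log 768) / Real.log (Real.log 3)
  refine ⟨(1 + 1 / 4) * Real.exp 1 ^ 4 * B * D, by positivity, fun N _ χ hχ hG s hs ↦ ?_⟩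
  have hN : (3 : ℝ) ≤ N := mod_cast three_le_level_of_ne_one hχ
  have hlogN : 1 ≤ Real.log N := one_lt_log_three.le.trans (Real.log_le_log (by norm_num) hN)
  have hne {z : ℂ} (hz : 1 - 1 / 4 ≤ z.re) : DirichletCharacter.LFunction χ z ≠ 0 :=
    LFunction_ne_zero_of_GRHFor hχ hG (by linarith)
  have hdiff := DirichletCharacter.differentiable_LFunction hχ
  refine ⟨hne (by linarith), ?_⟩
  calc ‖logDeriv (DirichletCharacter.LFunction χ) s‖
      ≤ (1 + 1 / 4) * ((Real.exp 1 * (2 + |s.im|)) ^ (1 / (1 / 4) : ℝ) *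
          (B * (1 + Real.log (768 * Real.log N)))) :=
        norm_le_mul_one_add_log_of_strip (by norm_num) (by linarith) hB₁ hs
          (hdiff.deriv.differentiableOn.div hdiff.differentiableOn fun z hz ↦ hne hz.1)
          (fun z hz ↦ norm_logDeriv_LFunction_le_log_level_mul hχ hG (by linarith)) (hB N χ)
    _ ≤ (1 + 1 / 4) * ((Real.exp 1 * (2 + |s.im|)) ^ 4 * (B * (D * Real.log (Real.log N)))) := by
        rw [one_div_one_div, Real.rpow_ofNat]
        gcongr
        exact one_add_log_mul_log_le (by norm_num) hN
    _ = _ := by ring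

/-- Under GRH, for primitive `χ` mod `N`, the logarithmic derivative of `L(s,χ)` at
`s = 1 + 2iT` is `O_T(log log N)`. -/
theorem log_deriv_L_bound_on_GRH (T : ℝ) :
    ∃ C : ℝ, 0 < C ∧ ∀ (N : ℕ) [NeZero N], 3 ≤ N →
      ∀ χ : DirichletCharacter ℂ N, χ.IsPrimitive → GRHFor χ →
        DirichletCharacter.LFunction χ (1 + 2 * Complex.I * (T : ℂ)) ≠ 0 ∧
        ‖deriv (DirichletCharacter.LFunction χ) (1 + 2 * Complex.I * (T : ℂ)) /
            DirichletCharacter.LFunction χ (1 + 2 * Complex.I * (T : ℂ))‖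
          ≤ C * Real.log (Real.log N) := by
  obtain ⟨C, hC, hbound⟩ := log_deriv_L_bound_on_GRH_general
  exact ⟨C * (2 + |(1 + 2 * Complex.I * (T : ℂ)).im|) ^ 4, by positivity, fun N _ hN χ hχ hG ↦
    hbound N χ (ne_one_of_isPrimitive (by lia) hχ) hG _ (by simp)⟩
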